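/- Under a scaling of the heterogeneous key predistribution model with on/off channels satisfying the scaling condition Λ_1(n) = α_n λ_1(n) = c_n (log n)/n with lim_{n→∞} c_n = c, if c < 1 then the probability that the random graph G(n; μ, K_n, P_n, α_n) is connected tends to 0 as n → ∞. -/

import Mathlib

open Filter

/-- Probability that a uniformly random `b`-subset of a `P`-set avoids a fixed `a`-subset. -/
noncomputable def avoidProb (P a b : ℕ) : ℝ := ((P - a).choose b : ℝ) / (P.choose b : ℝ)

/-- `p_{ab}` : probability that independent uniformly random key rings of sizes
`a` and `b` (from a pool of size `P`) intersect. -/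
noncomputable def pEdge (P a b : ℕ) : ℝ := 1 - avoidProb P a b

/-- `λ_i` : mean edge probability of a class-`i` node in the inhomogeneous random key graph. -/
noncomputable def lamb {r : ℕ} (μ : Fin (r + 1) → ℝ) (K : Fin (r + 1) → ℕ) (P : ℕ)
    (i : Fin (r + 1)) : ℝ :=
  ∑ j, μ j * pEdge P (K i) (K j)

/-- A configuration of the model: a class for each vertex, a key ring for each vertex,
and an on/off state for each (unordered) channel. -/
abbrev Config (n r P : ℕ) := (Fin n → Fin (r + 1)) × (Fin n → Finset (Fin P)) × (Sym2 (Fin n) → Bool)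

/-- Probability weight of a configuration: classes are i.i.d. with law `μ`; given its class `i`,
a vertex's key ring is uniform among the `C(P, K i)` subsets of size `K i`; channels over
distinct pairs are i.i.d. Bernoulli(`α`) (diagonal channel variables are forced to `false`). -/
noncomputable def wt {n r P : ℕ} (μ : Fin (r + 1) → ℝ) (K : Fin (r + 1) → ℕ) (α : ℝ)
    (c : Config n r P) : ℝ :=
  (∏ x : Fin n, μ (c.1 x)) *
    (∏ x : Fin n, if (c.2.1 x).card = K (c.1 x) then ((P.choose (K (c.1 x)) : ℝ))⁻¹ else 0) *
    (∏ e : Sym2 (Fin n),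
      if e.IsDiag then (if c.2.2 e then 0 else 1) else (if c.2.2 e then α else 1 - α))

open Classical in
/-- Probability of an event under the heterogeneous key predistribution model
with on/off channels. -/
noncomputable def pr {n r P : ℕ} (μ : Fin (r + 1) → ℝ) (K : Fin (r + 1) → ℕ) (α : ℝ)
    (E : Config n r P → Prop) : ℝ :=
  ∑ c : Config n r P, if E c then wt μ K α c else 0

/-- Two vertices are adjacent iff their key rings intersect and the channel between them is on. -/
def Adj {n r P : ℕ} (c : Config n r P) (x y : Fin n) : Prop :=
  x ≠ y ∧ ((c.2.1 x) ∩ (c.2.1 y)).Nonempty ∧ c.2.2 s(x, y) = true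

/-- The random graph `G(n; μ, K, P, α)` as a simple graph. -/
def graphOf {n r P : ℕ} (c : Config n r P) : SimpleGraph (Fin n) :=
  SimpleGraph.fromRel (fun x y => ((c.2.1 x) ∩ (c.2.1 y)).Nonempty ∧ c.2.2 s(x, y) = true)

/-- A vertex is isolated if it has no neighbours. -/
def Isolated {n r P : ℕ} (c : Config n r P) (x : Fin n) : Prop := ∀ y, ¬ Adj c x y

/-- The graph has no isolated nodes. -/
def NoIsolatedNodes {n r P : ℕ} (c : Config n r P) : Prop := ∀ x, ¬ Isolated c x

/-!
Fix a class `i` and count the isolated vertices of class `i`. Given the key ring of such a vertex,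
the other vertices are adjacent to it independently with probability `Λ = α λ_i`, so the mean count
is `n μ_i (1 - Λ)^(n-1) = n^(1-c+o(1))`, which tends to infinity.

Given the key rings `S`, `T` of two vertices of class `i`, a third vertex is adjacent to neither
with probability at most `(1 - Λ)² + α² q(S, T)`, where `q(S, T)` is the probability that its key
ring meets both `S` and `T`. Since `q` may be large when `S` and `T` overlap, it is not bounded
pointwise: `e^y ≤ 1 + y e^y` makes the second moment depend on `q` only through its mean over
independent `S` and `T`. Conditioning on the third ring instead, this mean is
`∑ j, μ_j p_ij² ≤ λ_i² ∑ j, μ_j⁻¹`, because `μ_j p_ij ≤ λ_i`. The correlation error is therefore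
of order `n Λ² e^(nΛ) = n^(c-1+o(1))`, and Chebyshev's inequality shows that with high probability
some vertex of class `i` is isolated.
-/

section

open Finset
open scoped BigOperators

/-! ### The second moment method -/

section SecondMoment

variable {Ω ι : Type*} [Fintype Ω] [Fintype ι] {w : Ω → ℝ} {E : Ω → Prop} [DecidablePred E]

lemma sq_mul_sum_filter_le_variance (hw : ∀ ω, 0 ≤ w ω) (hw1 : ∑ ω, w ω = 1) {X : Ω → ℝ}
    (hX : ∀ ω, E ω → X ω = 0) :
    (∑ ω, w ω * X ω) ^ 2 * ∑ ω with E ω, w ω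
      ≤ ∑ ω, w ω * X ω ^ 2 - (∑ ω, w ω * X ω) ^ 2 := by
  set m := ∑ ω, w ω * X ω with hm
  calc m ^ 2 * ∑ ω with E ω, w ω = ∑ ω with E ω, w ω * (X ω - m) ^ 2 := by
        rw [mul_sum]
        refine sum_congr rfl fun ω hω => ?_
        rw [hX ω (mem_filter.1 hω).2]
        ring
    _ ≤ ∑ ω, w ω * (X ω - m) ^ 2 :=
        sum_le_univ_sum_of_nonneg fun ω => mul_nonneg (hw ω) (sq_nonneg _)
    _ = ∑ ω, w ω * X ω ^ 2 - 2 * m * ∑ ω, w ω * X ω + m ^ 2 * ∑ ω, w ω := by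
        simp only [mul_sum, ← sum_sub_distrib, ← sum_add_distrib]
        exact sum_congr rfl fun ω _ => by ring
    _ = ∑ ω, w ω * X ω ^ 2 - m ^ 2 := by
        rw [hw1, ← hm]
        ring

lemma sum_mul_sum_sq_le_of_pairwise {X : ι → Ω → ℝ} (hX : ∀ x ω, X x ω * X x ω = X x ω)
    {m B : ℝ} (hm : ∀ x, ∑ ω, w ω * X x ω = m) (hB : 0 ≤ B)
    (hpair : ∀ x y, x ≠ y → ∑ ω, w ω * (X x ω * X y ω) ≤ B) :
    ∑ ω, w ω * (∑ x, X x ω) ^ 2 ≤ Fintype.card ι * m + (Fintype.card ι : ℝ) ^ 2 * B := by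
  classical
  have hle : ∀ x y, ∑ ω, w ω * (X x ω * X y ω) ≤ (if x = y then m else 0) + B := by
    intro x y
    rcases eq_or_ne x y with rfl | hxy
    · simpa [hX, hm] using hB
    · simpa [hxy] using hpair x y hxy
  calc ∑ ω, w ω * (∑ x, X x ω) ^ 2 = ∑ x, ∑ y, ∑ ω, w ω * (X x ω * X y ω) := by
        simp_rw [sq, sum_mul_sum, mul_sum]
        rw [sum_comm]
        exact sum_congr rfl fun x _ => sum_comm
    _ ≤ ∑ x : ι, ∑ y, ((if x = y then m else 0) + B) :=
        sum_le_sum fun x _ => sum_le_sum fun y _ => hle x y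
    _ = Fintype.card ι * m + (Fintype.card ι : ℝ) ^ 2 * B := by
        simp [sum_add_distrib]
        ring

lemma sum_filter_le_of_pairwise [Nonempty ι] (hw : ∀ ω, 0 ≤ w ω) (hw1 : ∑ ω, w ω = 1)
    {X : ι → Ω → ℝ} (hX : ∀ x ω, X x ω * X x ω = X x ω) (hE : ∀ ω, E ω → ∀ x, X x ω = 0)
    {m M : ℝ} (hm : ∀ x, ∑ ω, w ω * X x ω = m) (hm0 : 0 < m) (hM : 0 ≤ M)
    (hpair : ∀ x y, x ≠ y → ∑ ω, w ω * (X x ω * X y ω) ≤ m ^ 2 * M) :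
    ∑ ω with E ω, w ω ≤ (Fintype.card ι * m)⁻¹ + (M - 1) := by
  set N := (Fintype.card ι : ℝ) with hN
  have hN0 : 0 < N := by
    rw [hN]
    exact_mod_cast Fintype.card_pos
  have hmean : ∑ ω, w ω * ∑ x, X x ω = N * m := by
    simp_rw [mul_sum]
    rw [sum_comm]
    simp [hm, hN]
  have hvar := sq_mul_sum_filter_le_variance (X := fun ω => ∑ x, X x ω) hw hw1
    fun ω hω => sum_eq_zero fun x _ => hE ω hω x
  have hsq := sum_mul_sum_sq_le_of_pairwise hX hm (mul_nonneg (sq_nonneg m) hM) hpair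
  rw [hmean] at hvar
  refine le_of_mul_le_mul_left ?_ (by positivity : 0 < (N * m) ^ 2)
  calc (N * m) ^ 2 * ∑ ω with E ω, w ω ≤ N * m + N ^ 2 * (m ^ 2 * M) - (N * m) ^ 2 := by linarith
    _ = (N * m) ^ 2 * ((N * m)⁻¹ + (M - 1)) := by
        field_simp
        ring

end SecondMoment

/-! ### Sums over product spaces with pinned coordinates -/

section Pinned

variable {ι V R : Type*} [Fintype ι] [DecidableEq ι] [Fintype V] [CommSemiring R]

lemma sum_pi_eq_sum_sum_funSplitAt (x : ι) (F : (ι → V) → R) :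
    ∑ ω, F ω = ∑ a, ∑ ρ : {z // z ≠ x} → V, F ((Equiv.funSplitAt x V).symm (a, ρ)) := by
  rw [← (Equiv.funSplitAt x V).symm.sum_comp, Fintype.sum_prod_type]

lemma sum_pi_mul_prod_compl_singleton (x : ι) (φ : V → R) (h : V → V → R) :
    ∑ ω : ι → V, φ (ω x) * ∏ z ∈ {x}ᶜ, h (ω x) (ω z)
      = ∑ a, φ a * (∑ v, h a v) ^ (Fintype.card ι - 1) := by
  rw [sum_pi_eq_sum_sum_funSplitAt x]
  refine sum_congr rfl fun a _ => ?_
  have hcard : Fintype.card {z // z ≠ x} = Fintype.card ι - 1 := by simp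
  simp_rw [prod_subtype ({x}ᶜ : Finset ι) (p := (· ≠ x)) (by simp), ← hcard, ← card_univ,
    ← prod_const, Fintype.prod_sum, mul_sum]
  refine sum_congr rfl fun ρ _ => ?_
  simp [fun z : {z // z ≠ x} => z.2]

lemma sum_pi_mul_prod_compl_pair {x y : ι} (hxy : x ≠ y) (φ : V → V → R) (h : V → V → V → R) :
    ∑ ω : ι → V, φ (ω x) (ω y) * ∏ z ∈ {x, y}ᶜ, h (ω x) (ω y) (ω z)
      = ∑ a, ∑ b, φ a b * (∑ v, h a b v) ^ (Fintype.card ι - 2) := by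
  rw [sum_pi_eq_sum_sum_funSplitAt x]
  refine sum_congr rfl fun a _ => ?_
  have hcard : Fintype.card {z // z ≠ x} - 1 = Fintype.card ι - 2 := by
    simp [Nat.sub_sub]
  let y' : {z // z ≠ x} := ⟨y, hxy.symm⟩
  rw [← hcard, ← sum_pi_mul_prod_compl_singleton y']
  refine sum_congr rfl fun ρ _ => ?_
  have hmap : ({x, y}ᶜ : Finset ι) = ({y'}ᶜ : Finset {z // z ≠ x}).map (.subtype _) := by
    ext z
    simp [y', Subtype.ext_iff, and_comm]
  rw [hmap, prod_map]
  simp [hxy.symm, y', fun z : {z // z ≠ x} => z.2]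

end Pinned

/-! ### Elementary inequalities -/

lemma exp_le_one_add_mul_exp (y : ℝ) : Real.exp y ≤ 1 + y * Real.exp y := by
  have h := mul_le_mul_of_nonneg_right (Real.one_sub_le_exp_neg y) (Real.exp_pos y).le
  rw [← Real.exp_add, neg_add_cancel, Real.exp_zero] at h
  linarith

-- The right-hand side is affine in `δ`, so averaging it over `δ` only involves the mean of `δ`.
lemma add_pow_le_pow_mul_one_add {D δ B : ℝ} (hD : 0 < D) (hδ : 0 ≤ δ) (hδB : δ ≤ B) (k : ℕ) :
    (D + δ) ^ k ≤ D ^ k * (1 + k * δ / D * Real.exp (k * B / D)) := by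
  calc (D + δ) ^ k = D ^ k * (δ / D + 1) ^ k := by
        rw [← mul_pow, mul_add, mul_div_cancel₀ _ hD.ne', mul_one, add_comm]
    _ ≤ D ^ k * Real.exp (k * δ / D) := by
        rw [mul_div_assoc, Real.exp_nat_mul]
        gcongr
        exact Real.add_one_le_exp _
    _ ≤ D ^ k * (1 + k * δ / D * Real.exp (k * B / D)) := by
        gcongr
        refine (exp_le_one_add_mul_exp _).trans ?_
        gcongr

lemma inv_one_sub_pow_le_exp {L : ℝ} (hL : L < 1) (n : ℕ) :
    ((1 - L) ^ n)⁻¹ ≤ Real.exp (n * L / (1 - L)) := by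
  have hL' : 0 < 1 - L := sub_pos.2 hL
  rw [mul_div_assoc, Real.exp_nat_mul, ← inv_pow]
  gcongr
  calc (1 - L)⁻¹ = L / (1 - L) + 1 := by
        field_simp
        ring
    _ ≤ Real.exp (L / (1 - L)) := Real.add_one_le_exp _

lemma sum_mul_sq_le_sq_sum_mul {ι : Type*} [Fintype ι] {u p : ι → ℝ} (hu : ∀ j, 0 ≤ u j)
    (hp : ∀ j, 0 ≤ p j) :
    ∑ j, u j * p j ^ 2 ≤ (∑ j, u j * p j) ^ 2 * ∑ j, (u j)⁻¹ := by
  rw [mul_sum]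
  refine sum_le_sum fun j _ => ?_
  have hle : u j * p j ≤ ∑ k, u k * p k :=
    single_le_sum (f := fun k => u k * p k) (fun k _ => mul_nonneg (hu k) (hp k)) (mem_univ j)
  calc u j * p j ^ 2 = (u j * p j) ^ 2 * (u j)⁻¹ := by
        rcases eq_or_ne (u j) 0 with h | h
        · simp [h]
        · field_simp
    _ ≤ (∑ k, u k * p k) ^ 2 * (u j)⁻¹ := by
        have := mul_nonneg (hu j) (hp j)
        have := inv_nonneg.2 (hu j)
        gcongr

/-! ### Random key rings -/

section Rings

variable {P : ℕ}

/-- Indicator that two key rings share a key. -/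
def meet (S T : Finset (Fin P)) : ℝ := if Disjoint S T then 0 else 1

lemma meet_nonneg (S T : Finset (Fin P)) : 0 ≤ meet S T := by
  unfold meet
  split_ifs <;> norm_num

lemma meet_le_one (S T : Finset (Fin P)) : meet S T ≤ 1 := by
  unfold meet
  split_ifs <;> norm_num

lemma meet_comm (S T : Finset (Fin P)) : meet S T = meet T S := by
  simp only [meet, disjoint_comm]

lemma powersetCard_univ_nonempty {k : ℕ} (hk : k ≤ P) :
    (powersetCard k (univ : Finset (Fin P))).Nonempty :=
  powersetCard_nonempty.2 (by simpa using hk)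

lemma expect_meet {k : ℕ} (hk : k ≤ P) (S : Finset (Fin P)) :
    𝔼 T ∈ powersetCard k univ, meet S T = pEdge P #S k := by
  have hdisj : {T ∈ powersetCard k (univ : Finset (Fin P)) | Disjoint S T} = powersetCard k Sᶜ := by
    ext T
    simp [mem_powersetCard, subset_compl_iff_disjoint_left, and_comm]
  have hmeet : ∀ T, meet S T = 1 - if Disjoint S T then 1 else 0 := by
    intro T
    unfold meet
    split_ifs <;> norm_num
  simp_rw [hmeet]
  rw [expect_sub_distrib, expect_const (powersetCard_univ_nonempty hk), expect_eq_sum_div_card,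
    sum_boole, hdisj]
  simp [pEdge, avoidProb, card_compl]

lemma pEdge_comm {a b : ℕ} (ha : a ≤ P) (hb : b ≤ P) : pEdge P a b = pEdge P b a := by
  have key : ∀ {a b : ℕ}, a ≤ P → b ≤ P → pEdge P a b =
      𝔼 S ∈ powersetCard a (univ : Finset (Fin P)), 𝔼 T ∈ powersetCard b univ, meet S T := by
    intro a b ha hb
    rw [← expect_const (powersetCard_univ_nonempty ha) (pEdge P a b)]
    refine expect_congr rfl fun S hS => ?_
    rw [expect_meet hb, (mem_powersetCard.1 hS).2]
  rw [key ha hb, key hb ha, expect_comm]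
  simp only [meet_comm]

lemma pEdge_nonneg {a b : ℕ} : 0 ≤ pEdge P a b := by
  refine sub_nonneg.2 (div_le_one_of_le₀ ?_ (by positivity))
  exact_mod_cast Nat.choose_le_choose b (Nat.sub_le P a)

end Rings

/-! ### The class and key ring of one vertex -/

section OneVertex

variable {r P : ℕ} {μ : Fin (r + 1) → ℝ} {K : Fin (r + 1) → ℕ}

/-- Joint law of the class and the key ring of a single vertex. -/
noncomputable def vertexWt (μ : Fin (r + 1) → ℝ) (K : Fin (r + 1) → ℕ)
    (v : Fin (r + 1) × Finset (Fin P)) : ℝ :=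
  μ v.1 * if #v.2 = K v.1 then (P.choose (K v.1) : ℝ)⁻¹ else 0

/-- Conditional probability, given the key rings `S` and `T` of two vertices, that they are not
adjacent when their channel is on with probability `α`. -/
def nonadj (α : ℝ) (S T : Finset (Fin P)) : ℝ := 1 - α * meet S T

/-- Probability that the key ring of a random vertex meets both `S` and `T`. -/
noncomputable def commonHit (μ : Fin (r + 1) → ℝ) (K : Fin (r + 1) → ℕ)
    (S T : Finset (Fin P)) : ℝ :=
  ∑ v, vertexWt μ K v * (meet S v.2 * meet T v.2)

lemma nonadj_eq_ite (α : ℝ) (S T : Finset (Fin P)) :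
    nonadj α S T = if Disjoint S T then 1 else 1 - α := by
  unfold nonadj meet
  split_ifs <;> ring

lemma nonadj_nonneg {α : ℝ} (hα : α ∈ Set.Icc (0 : ℝ) 1) (S T : Finset (Fin P)) :
    0 ≤ nonadj α S T :=
  sub_nonneg.2 (mul_le_one₀ hα.2 (meet_nonneg S T) (meet_le_one S T))

lemma vertexWt_nonneg (hμ : ∀ j, 0 ≤ μ j) (v : Fin (r + 1) × Finset (Fin P)) :
    0 ≤ vertexWt μ K v := by
  unfold vertexWt
  have := hμ v.1
  positivity

lemma sum_vertexWt_mul (f : Fin (r + 1) × Finset (Fin P) → ℝ) :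
    ∑ v, vertexWt μ K v * f v = ∑ j, μ j * 𝔼 T ∈ powersetCard (K j) univ, f (j, T) := by
  rw [Fintype.sum_prod_type]
  refine sum_congr rfl fun j _ => ?_
  rw [expect_eq_sum_div_card, ← univ_filter_card_eq, sum_filter, univ_filter_card_eq,
    card_powersetCard, card_univ, Fintype.card_fin, sum_div, mul_sum]
  refine sum_congr rfl fun T _ => ?_
  simp only [vertexWt]
  split_ifs <;> ring

lemma sum_vertexWt_of_class (i : Fin (r + 1)) (f : Finset (Fin P) → ℝ) :
    ∑ v : Fin (r + 1) × Finset (Fin P), vertexWt μ K v * (if v.1 = i then 1 else 0) * f v.2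
      = μ i * 𝔼 S ∈ powersetCard (K i) univ, f S := by
  simp_rw [mul_assoc]
  rw [sum_vertexWt_mul, sum_eq_single i _ (by simp)]
  · simp
  · intro j _ hj
    simp [hj]

lemma sum_sum_vertexWt_of_class (i : Fin (r + 1)) (f : Finset (Fin P) → Finset (Fin P) → ℝ) :
    ∑ v : Fin (r + 1) × Finset (Fin P), ∑ w : Fin (r + 1) × Finset (Fin P),
      vertexWt μ K v * vertexWt μ K w *
        ((if v.1 = i then 1 else 0) * if w.1 = i then 1 else 0) * f v.2 w.2
      = μ i ^ 2 * 𝔼 S ∈ powersetCard (K i) univ, 𝔼 T ∈ powersetCard (K i) univ, f S T := by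
  have hinner : ∀ v : Fin (r + 1) × Finset (Fin P), ∑ w : Fin (r + 1) × Finset (Fin P),
      vertexWt μ K v * vertexWt μ K w *
        ((if v.1 = i then 1 else 0) * if w.1 = i then 1 else 0) * f v.2 w.2
      = vertexWt μ K v * (if v.1 = i then 1 else 0) *
          (μ i * 𝔼 T ∈ powersetCard (K i) univ, f v.2 T) := by
    intro v
    rw [← sum_vertexWt_of_class, mul_sum]
    exact sum_congr rfl fun w _ => by ring
  simp_rw [hinner]
  rw [sum_vertexWt_of_class i fun S => μ i * 𝔼 T ∈ powersetCard (K i) univ, f S T, ← mul_expect,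
    ← mul_assoc, ← sq]

lemma sum_vertexWt (hμsum : ∑ j, μ j = 1) (hK : ∀ j, K j ≤ P) :
    ∑ v : Fin (r + 1) × Finset (Fin P), vertexWt μ K v = 1 := by
  have h := sum_vertexWt_mul (P := P) (μ := μ) (K := K) fun _ => 1
  simp_rw [expect_const (powersetCard_univ_nonempty (hK _))] at h
  simpa [hμsum] using h

variable {i : Fin (r + 1)} {S T : Finset (Fin P)}

lemma sum_vertexWt_mul_meet (hK : ∀ j, K j ≤ P) (hS : #S = K i) :
    ∑ v : Fin (r + 1) × Finset (Fin P), vertexWt μ K v * meet S v.2 = lamb μ K P i := by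
  simp only [sum_vertexWt_mul, expect_meet (hK _), hS, lamb]

lemma lamb_nonneg (hμ : ∀ j, 0 ≤ μ j) : 0 ≤ lamb μ K P i :=
  sum_nonneg fun j _ => mul_nonneg (hμ j) pEdge_nonneg

lemma sum_vertexWt_mul_nonadj (hμsum : ∑ j, μ j = 1) (hK : ∀ j, K j ≤ P) (hS : #S = K i)
    (α : ℝ) :
    ∑ v : Fin (r + 1) × Finset (Fin P), vertexWt μ K v * nonadj α S v.2
      = 1 - α * lamb μ K P i := by
  rw [← sum_vertexWt_mul_meet hK hS, ← sum_vertexWt hμsum hK, mul_sum, ← sum_sub_distrib]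
  refine sum_congr rfl fun v _ => ?_
  unfold nonadj
  ring

lemma sum_vertexWt_mul_nonadj_mul_nonadj_le (hμsum : ∑ j, μ j = 1) (hK : ∀ j, K j ≤ P)
    (hS : #S = K i) (hT : #T = K i) (α : ℝ) :
    ∑ v : Fin (r + 1) × Finset (Fin P), vertexWt μ K v * (nonadj α S v.2 * nonadj α T v.2)
      ≤ (1 - α * lamb μ K P i) ^ 2 + α ^ 2 * commonHit μ K S T := by
  calc ∑ v : Fin (r + 1) × Finset (Fin P), vertexWt μ K v * (nonadj α S v.2 * nonadj α T v.2)
      = ∑ v : Fin (r + 1) × Finset (Fin P), vertexWt μ K v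
          - α * ∑ v : Fin (r + 1) × Finset (Fin P), vertexWt μ K v * meet S v.2
          - α * ∑ v : Fin (r + 1) × Finset (Fin P), vertexWt μ K v * meet T v.2
          + α ^ 2 * commonHit μ K S T := by
        simp only [commonHit, mul_sum, ← sum_sub_distrib, ← sum_add_distrib]
        refine sum_congr rfl fun v _ => ?_
        unfold nonadj
        ring
    _ = 1 - 2 * (α * lamb μ K P i) + α ^ 2 * commonHit μ K S T := by
        rw [sum_vertexWt hμsum hK, sum_vertexWt_mul_meet hK hS, sum_vertexWt_mul_meet hK hT]
        ring
    _ ≤ (1 - α * lamb μ K P i) ^ 2 + α ^ 2 * commonHit μ K S T := by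
        linarith [sq_nonneg (α * lamb μ K P i)]

lemma commonHit_nonneg (hμ : ∀ j, 0 ≤ μ j) : 0 ≤ commonHit μ K S T :=
  sum_nonneg fun v _ =>
    mul_nonneg (vertexWt_nonneg hμ v) (mul_nonneg (meet_nonneg _ _) (meet_nonneg _ _))

lemma commonHit_le_lamb (hμ : ∀ j, 0 ≤ μ j) (hK : ∀ j, K j ≤ P) (hS : #S = K i) :
    commonHit μ K S T ≤ lamb μ K P i := by
  rw [← sum_vertexWt_mul_meet hK hS]
  refine sum_le_sum fun v _ => mul_le_mul_of_nonneg_left ?_ (vertexWt_nonneg hμ v)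
  exact mul_le_of_le_one_right (meet_nonneg _ _) (meet_le_one _ _)

-- Averaging over `S` and `T` before the third key ring decouples the two events.
lemma expect_expect_commonHit {a b : ℕ} (ha : a ≤ P) (hb : b ≤ P) (hK : ∀ j, K j ≤ P) :
    𝔼 S ∈ powersetCard a (univ : Finset (Fin P)), 𝔼 T ∈ powersetCard b univ, commonHit μ K S T
      = ∑ j, μ j * (pEdge P a (K j) * pEdge P b (K j)) := by
  have hfix : ∀ v : Fin (r + 1) × Finset (Fin P),
      𝔼 S ∈ powersetCard a univ, 𝔼 T ∈ powersetCard b univ,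
        vertexWt μ K v * (meet S v.2 * meet T v.2)
          = vertexWt μ K v * (pEdge P #v.2 a * pEdge P #v.2 b) := by
    intro v
    simp_rw [← mul_expect, ← expect_mul, meet_comm _ v.2, expect_meet ha, expect_meet hb]
  simp_rw [commonHit, expect_sum_comm, hfix, sum_vertexWt_mul]
  refine sum_congr rfl fun j _ => ?_
  rw [pEdge_comm ha (hK j), pEdge_comm hb (hK j),
    ← expect_const (powersetCard_univ_nonempty (hK j)) (pEdge P (K j) a * pEdge P (K j) b)]
  congr 1
  exact expect_congr rfl fun U hU => by rw [(mem_powersetCard.1 hU).2]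

lemma expect_expect_commonHit_le (hμ : ∀ j, 0 ≤ μ j) (hK : ∀ j, K j ≤ P) :
    𝔼 S ∈ powersetCard (K i) (univ : Finset (Fin P)), 𝔼 T ∈ powersetCard (K i) univ,
      commonHit μ K S T ≤ lamb μ K P i ^ 2 * ∑ j, (μ j)⁻¹ := by
  simp_rw [expect_expect_commonHit (hK i) (hK i) hK, ← sq]
  exact sum_mul_sq_le_sq_sum_mul hμ fun j => pEdge_nonneg

end OneVertex

/-! ### Configurations as independent vertices and channels -/

section Configurations

variable {n r P : ℕ} {μ : Fin (r + 1) → ℝ} {K : Fin (r + 1) → ℕ} {α : ℝ}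

/-- Law of the state `b` of the channel `e`. -/
noncomputable def channelWt (α : ℝ) (e : Sym2 (Fin n)) (b : Bool) : ℝ :=
  if e.IsDiag then (if b then 0 else 1) else (if b then α else 1 - α)

/-- The configuration with vertex data (class, key ring) `ω` and channel states `B`. -/
def toConfig (ω : Fin n → Fin (r + 1) × Finset (Fin P)) (B : Sym2 (Fin n) → Bool) :
    Config n r P :=
  (fun x => (ω x).1, fun x => (ω x).2, B)

/-- No edge joins a vertex of `A` to a vertex outside `A`. -/
def NoCross (A : Finset (Fin n)) (c : Config n r P) : Prop := ∀ a ∈ A, ∀ z ∉ A, ¬ Adj c a z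

/-- The channels between `A` and its complement whose end vertices share a key. -/
def cutChannels (A : Finset (Fin n)) (ω : Fin n → Fin (r + 1) × Finset (Fin P)) :
    Finset (Sym2 (Fin n)) :=
  {p ∈ A ×ˢ Aᶜ | ¬ Disjoint (ω p.1).2 (ω p.2).2}.image fun p => s(p.1, p.2)

lemma wt_nonneg (hμ : ∀ j, 0 ≤ μ j) (hα : α ∈ Set.Icc (0 : ℝ) 1) (c : Config n r P) :
    0 ≤ wt μ K α c := by
  refine mul_nonneg (mul_nonneg (prod_nonneg fun x _ => hμ _) (prod_nonneg fun x _ => ?_))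
    (prod_nonneg fun e _ => ?_)
  · positivity
  · have := hα.1
    have := sub_nonneg.2 hα.2
    split_ifs <;> positivity

lemma sum_wt_mul (f : Config n r P → ℝ) :
    ∑ c, wt μ K α c * f c = ∑ ω : Fin n → Fin (r + 1) × Finset (Fin P),
      (∏ z, vertexWt μ K (ω z)) * ∑ B, (∏ e, channelWt α e (B e)) * f (toConfig ω B) := by
  rw [← (Equiv.prodAssoc _ _ _).sum_comp, Fintype.sum_prod_type,
    ← (Equiv.arrowProdEquivProdArrow (Fin n) (fun _ => Fin (r + 1))
      fun _ => Finset (Fin P)).sum_comp]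
  simp_rw [mul_sum, ← mul_assoc]
  refine sum_congr rfl fun ω _ => sum_congr rfl fun B _ => ?_
  simp only [wt, vertexWt, channelWt, toConfig, Equiv.prodAssoc, Equiv.arrowProdEquivProdArrow,
    Equiv.coe_fn_mk, prod_mul_distrib]
  rfl

lemma sum_channelWt_of_forall_off {F : Finset (Sym2 (Fin n))} (hF : ∀ e ∈ F, ¬ e.IsDiag) :
    ∑ B : Sym2 (Fin n) → Bool,
      (∏ e, channelWt α e (B e)) * (if ∀ e ∈ F, B e = false then 1 else 0) = (1 - α) ^ #F := by
  have hoff : ∀ B : Sym2 (Fin n) → Bool, (if ∀ e ∈ F, B e = false then (1 : ℝ) else 0)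
      = ∏ e, if e ∈ F → B e = false then 1 else 0 := by
    intro B
    simp [prod_ite_zero]
  simp_rw [hoff, ← prod_mul_distrib]
  rw [← Fintype.prod_sum fun e b => channelWt α e b * if e ∈ F → b = false then 1 else 0,
    ← prod_const, ← prod_subset (subset_univ F)]
  · refine prod_congr rfl fun e he => ?_
    simp [channelWt, he, hF e he]
  · intro e _ he
    by_cases h : e.IsDiag <;> simp [channelWt, he, h]

lemma noCross_toConfig (A : Finset (Fin n)) (ω : Fin n → Fin (r + 1) × Finset (Fin P))
    (B : Sym2 (Fin n) → Bool) :
    NoCross A (toConfig ω B) ↔ ∀ e ∈ cutChannels A ω, B e = false := by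
  simp only [NoCross, Adj, toConfig, cutChannels, mem_image, mem_filter, mem_product, mem_compl,
    not_disjoint_iff_nonempty_inter]
  constructor
  · rintro h _ ⟨⟨a, z⟩, ⟨⟨ha, hz⟩, hmeet⟩, rfl⟩
    simpa using fun hB => h a ha z hz ⟨ne_of_mem_of_not_mem ha hz, hmeet, hB⟩
  · rintro h a ha z hz ⟨-, hmeet, hB⟩
    simp [h _ ⟨(a, z), ⟨⟨ha, hz⟩, hmeet⟩, rfl⟩] at hB

lemma not_isDiag_of_mem_cutChannels {A : Finset (Fin n)}
    {ω : Fin n → Fin (r + 1) × Finset (Fin P)} {e : Sym2 (Fin n)} (he : e ∈ cutChannels A ω) :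
    ¬ e.IsDiag := by
  simp only [cutChannels, mem_image, mem_filter, mem_product, mem_compl] at he
  obtain ⟨⟨a, z⟩, ⟨⟨ha, hz⟩, -⟩, rfl⟩ := he
  exact ne_of_mem_of_not_mem ha hz

lemma pow_card_cutChannels (A : Finset (Fin n)) (ω : Fin n → Fin (r + 1) × Finset (Fin P)) :
    (1 - α) ^ #(cutChannels A ω) = ∏ z ∈ Aᶜ, ∏ a ∈ A, nonadj α (ω a).2 (ω z).2 := by
  have hinj : Set.InjOn (fun p : Fin n × Fin n => s(p.1, p.2)) (A ×ˢ Aᶜ : Finset _) := by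
    rintro ⟨a, z⟩ hp ⟨a', z'⟩ hp' h
    simp only [coe_product, coe_compl, Set.mem_prod, mem_coe, Set.mem_compl_iff] at hp hp'
    rcases Sym2.eq_iff.1 h with ⟨rfl, rfl⟩ | ⟨rfl, rfl⟩
    · rfl
    · exact absurd hp.1 hp'.2
  rw [cutChannels, card_image_of_injOn (hinj.mono (coe_subset.2 (filter_subset _ _))),
    ← prod_const, prod_filter, prod_product_right]
  simp only [nonadj_eq_ite, ite_not]

open Classical in
lemma sum_wt_mul_noCross (A : Finset (Fin n)) (g : (Fin n → Fin (r + 1)) → ℝ) :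
    ∑ c : Config n r P, wt μ K α c * (if NoCross A c then g c.1 else 0)
      = ∑ ω : Fin n → Fin (r + 1) × Finset (Fin P),
          ((∏ a ∈ A, vertexWt μ K (ω a)) * g fun x => (ω x).1) *
            ∏ z ∈ Aᶜ, (vertexWt μ K (ω z) * ∏ a ∈ A, nonadj α (ω a).2 (ω z).2) := by
  rw [sum_wt_mul]
  refine sum_congr rfl fun ω _ => ?_
  rw [prod_mul_distrib, mul_mul_mul_comm, prod_mul_prod_compl]
  congr 1
  rw [← pow_card_cutChannels, ← sum_channelWt_of_forall_off fun _ => not_isDiag_of_mem_cutChannels,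
    mul_sum]
  refine sum_congr rfl fun B _ => ?_
  simp only [noCross_toConfig]
  split_ifs <;> simp [toConfig, mul_comm]

lemma sum_wt (hμsum : ∑ j, μ j = 1) (hK : ∀ j, K j ≤ P) :
    ∑ c : Config n r P, wt μ K α c = 1 := by
  have h := sum_wt_mul_noCross (n := n) (P := P) (μ := μ) (K := K) (α := α) ∅ fun _ => 1
  simpa [NoCross, ← Fintype.sum_pow, sum_vertexWt hμsum hK] using h

lemma pr_eq_sum_filter (E : Config n r P → Prop) [DecidablePred E] :
    pr μ K α E = ∑ c with E c, wt μ K α c := by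
  rw [pr, sum_filter]
  congr!

lemma pr_nonneg (hμ : ∀ j, 0 ≤ μ j) (hα : α ∈ Set.Icc (0 : ℝ) 1) (E : Config n r P → Prop) :
    0 ≤ pr μ K α E := by
  refine sum_nonneg fun c _ => ?_
  split_ifs
  exacts [wt_nonneg hμ hα c, le_rfl]

end Configurations

/-! ### Isolated vertices of a fixed class -/

section Moments

variable {n r P : ℕ} {μ : Fin (r + 1) → ℝ} {K : Fin (r + 1) → ℕ} {α : ℝ} {i : Fin (r + 1)}

open Classical in
/-- Indicator that `x` is an isolated vertex of class `i`; the second moment method is applied to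
the sum of these over all `x`. -/
noncomputable def isolatedInd (i : Fin (r + 1)) (x : Fin n) (c : Config n r P) : ℝ :=
  if Isolated c x ∧ c.1 x = i then 1 else 0

lemma noCross_singleton {c : Config n r P} {x : Fin n} : NoCross {x} c ↔ Isolated c x := by
  simp only [NoCross, Isolated, mem_singleton, forall_eq]
  exact ⟨fun h z hz => h z hz.1.symm hz, fun h z _ => h z⟩

lemma isolatedInd_mul_self (x : Fin n) (c : Config n r P) :
    isolatedInd i x c * isolatedInd i x c = isolatedInd i x c := by
  unfold isolatedInd
  split_ifs <;> simp

open Classical in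
lemma isolatedInd_eq_ite_noCross (x : Fin n) (c : Config n r P) :
    isolatedInd i x c = if NoCross {x} c then (if c.1 x = i then 1 else 0) else 0 := by
  simp only [isolatedInd, noCross_singleton, ite_and]

open Classical in
lemma isolatedInd_mul_le_ite_noCross (x y : Fin n) (c : Config n r P) :
    isolatedInd i x c * isolatedInd i y c
      ≤ if NoCross {x, y} c then (if c.1 x = i then 1 else 0) * (if c.1 y = i then 1 else 0)
        else 0 := by
  have hcross : Isolated c x → Isolated c y → NoCross {x, y} c := by
    intro hx hy a ha z _
    rcases mem_insert.1 ha with rfl | ha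
    · exact hx z
    · exact mem_singleton.1 ha ▸ hy z
  unfold isolatedInd
  split_ifs <;> simp_all

lemma isolatedInd_eq_zero_of_connected (hn : 2 ≤ n) {c : Config n r P}
    (h : (graphOf c).Connected) (x : Fin n) : isolatedInd i x c = 0 := by
  have : Nontrivial (Fin n) := Fin.nontrivial_iff_two_le.2 hn
  obtain ⟨y, hne, hadj⟩ := h.preconnected.exists_adj_of_nontrivial x
  refine if_neg fun hiso => hiso.1 y ⟨hne, ?_⟩
  rcases hadj with hadj | hadj
  · exact hadj
  · rwa [inter_comm, Sym2.eq_swap] at hadj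

lemma sum_wt_mul_isolatedInd (hμsum : ∑ j, μ j = 1) (hK : ∀ j, K j ≤ P) (x : Fin n) :
    ∑ c : Config n r P, wt μ K α c * isolatedInd i x c
      = μ i * (1 - α * lamb μ K P i) ^ (n - 1) := by
  classical
  simp_rw [isolatedInd_eq_ite_noCross]
  rw [sum_wt_mul_noCross {x} fun t => if t x = i then 1 else 0]
  simp_rw [prod_singleton]
  rw [sum_pi_mul_prod_compl_singleton x (fun a => vertexWt μ K a * if a.1 = i then 1 else 0)
    fun a v => vertexWt μ K v * nonadj α a.2 v.2, Fintype.card_fin,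
    sum_vertexWt_of_class i fun S =>
      (∑ v : Fin (r + 1) × Finset (Fin P), vertexWt μ K v * nonadj α S v.2) ^ (n - 1),
    ← expect_const (powersetCard_univ_nonempty (hK i)) ((1 - α * lamb μ K P i) ^ (n - 1))]
  congr 1
  exact expect_congr rfl fun S hS => by
    rw [sum_vertexWt_mul_nonadj hμsum hK (mem_powersetCard.1 hS).2]

lemma sum_wt_mul_isolatedInd_mul_le (hμ : ∀ j, 0 ≤ μ j) (hα : α ∈ Set.Icc (0 : ℝ) 1)
    {x y : Fin n} (hxy : x ≠ y) :
    ∑ c : Config n r P, wt μ K α c * (isolatedInd i x c * isolatedInd i y c)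
      ≤ μ i ^ 2 * 𝔼 S ∈ powersetCard (K i) univ, 𝔼 T ∈ powersetCard (K i) univ,
        (∑ v : Fin (r + 1) × Finset (Fin P), vertexWt μ K v *
          (nonadj α S v.2 * nonadj α T v.2)) ^ (n - 2) := by
  classical
  refine (sum_le_sum fun c _ => mul_le_mul_of_nonneg_left
    (isolatedInd_mul_le_ite_noCross x y c) (wt_nonneg hμ hα c)).trans (le_of_eq ?_)
  rw [sum_wt_mul_noCross {x, y} fun t => (if t x = i then 1 else 0) * if t y = i then 1 else 0]
  simp_rw [prod_pair hxy]
  rw [sum_pi_mul_prod_compl_pair hxy (fun a b => vertexWt μ K a * vertexWt μ K b *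
      ((if a.1 = i then 1 else 0) * if b.1 = i then 1 else 0))
    fun a b v => vertexWt μ K v * (nonadj α a.2 v.2 * nonadj α b.2 v.2), Fintype.card_fin]
  exact sum_sum_vertexWt_of_class i fun S T =>
    (∑ v : Fin (r + 1) × Finset (Fin P), vertexWt μ K v *
      (nonadj α S v.2 * nonadj α T v.2)) ^ (n - 2)

lemma sum_vertexWt_mul_nonadj_mul_nonadj_pow_le (hμ : ∀ j, 0 ≤ μ j) (hμsum : ∑ j, μ j = 1)
    (hK : ∀ j, K j ≤ P) (hα : α ∈ Set.Icc (0 : ℝ) 1) {L : ℝ} (hL : L = α * lamb μ K P i)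
    (hL1 : L < 1) {S T : Finset (Fin P)} (hS : #S = K i) (hT : #T = K i) (k : ℕ) :
    (∑ v : Fin (r + 1) × Finset (Fin P), vertexWt μ K v *
      (nonadj α S v.2 * nonadj α T v.2)) ^ k
      ≤ ((1 - L) ^ 2) ^ k * (1 + k * (α ^ 2 * commonHit μ K S T) / (1 - L) ^ 2 *
        Real.exp (k * L / (1 - L) ^ 2)) := by
  have : 0 < 1 - L := sub_pos.2 hL1
  have hq := commonHit_nonneg (K := K) (S := S) (T := T) hμ
  have hqL : α ^ 2 * commonHit μ K S T ≤ L := hL ▸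
    mul_le_mul (pow_le_of_le_one hα.1 hα.2 two_ne_zero) (commonHit_le_lamb hμ hK hS) hq hα.1
  calc _ ≤ ((1 - L) ^ 2 + α ^ 2 * commonHit μ K S T) ^ k := by
        refine pow_le_pow_left₀ (sum_nonneg fun v _ => mul_nonneg (vertexWt_nonneg hμ v)
          (mul_nonneg (nonadj_nonneg hα _ _) (nonadj_nonneg hα _ _))) ?_ k
        exact hL ▸ sum_vertexWt_mul_nonadj_mul_nonadj_le hμsum hK hS hT α
    _ ≤ _ := add_pow_le_pow_mul_one_add (by positivity) (by positivity) hqL k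

lemma expect_expect_sum_nonadj_pow_le (hμ : ∀ j, 0 ≤ μ j) (hμsum : ∑ j, μ j = 1)
    (hK : ∀ j, K j ≤ P) (hα : α ∈ Set.Icc (0 : ℝ) 1) {L : ℝ} (hL : L = α * lamb μ K P i)
    (hL1 : L < 1) (k : ℕ) :
    𝔼 S ∈ powersetCard (K i) univ, 𝔼 T ∈ powersetCard (K i) univ,
      (∑ v : Fin (r + 1) × Finset (Fin P), vertexWt μ K v *
        (nonadj α S v.2 * nonadj α T v.2)) ^ k
      ≤ ((1 - L) ^ 2) ^ k * (1 + (∑ j, (μ j)⁻¹) *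
        (k * L ^ 2 * Real.exp (k * L / (1 - L) ^ 2)) / (1 - L) ^ 2) := by
  have : 0 < 1 - L := sub_pos.2 hL1
  have hne := powersetCard_univ_nonempty (hK i)
  set D := (1 - L) ^ 2
  set E := Real.exp (k * L / D)
  calc _ ≤ 𝔼 S ∈ powersetCard (K i) (univ : Finset (Fin P)), 𝔼 T ∈ powersetCard (K i) univ,
        (D ^ k + D ^ k * k * α ^ 2 / D * E * commonHit μ K S T) :=
      expect_le_expect fun S hS => expect_le_expect fun T hT =>
        (sum_vertexWt_mul_nonadj_mul_nonadj_pow_le hμ hμsum hK hα hL hL1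
          (mem_powersetCard.1 hS).2 (mem_powersetCard.1 hT).2 k).trans (le_of_eq (by ring))
    _ = D ^ k + D ^ k * k * α ^ 2 / D * E *
        𝔼 S ∈ powersetCard (K i) (univ : Finset (Fin P)), 𝔼 T ∈ powersetCard (K i) univ,
          commonHit μ K S T := by
      simp_rw [expect_add_distrib, ← mul_expect, expect_const hne]
    _ ≤ D ^ k + D ^ k * k * α ^ 2 / D * E * (lamb μ K P i ^ 2 * ∑ j, (μ j)⁻¹) := by
      gcongr
      exact expect_expect_commonHit_le hμ hK
    _ = D ^ k * (1 + (∑ j, (μ j)⁻¹) * (k * L ^ 2 * E) / D) := by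
      rw [hL]
      ring

lemma sum_wt_mul_isolatedInd_mul_le_sq_mul (hμ : ∀ j, 0 ≤ μ j) (hμsum : ∑ j, μ j = 1)
    (hK : ∀ j, K j ≤ P) (hα : α ∈ Set.Icc (0 : ℝ) 1) (hn : 2 ≤ n) {L : ℝ}
    (hL : L = α * lamb μ K P i) (hL1 : L < 1) {x y : Fin n} (hxy : x ≠ y) :
    ∑ c : Config n r P, wt μ K α c * (isolatedInd i x c * isolatedInd i y c)
      ≤ (μ i * (1 - L) ^ (n - 1)) ^ 2 * (((1 - L) ^ 2)⁻¹ * (1 + (∑ j, (μ j)⁻¹) *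
        (n * L ^ 2 * Real.exp (n * L / (1 - L) ^ 2)) / (1 - L) ^ 2)) := by
  have hL0 : 0 ≤ L := hL ▸ mul_nonneg hα.1 (lamb_nonneg hμ)
  have hC : 0 ≤ ∑ j, (μ j)⁻¹ := sum_nonneg fun j _ => inv_nonneg.2 (hμ j)
  have : 0 < 1 - L := sub_pos.2 hL1
  have hkn : ((n - 2 : ℕ) : ℝ) ≤ n := by exact_mod_cast Nat.sub_le n 2
  have hpow : ((1 - L) ^ (n - 1)) ^ 2 * ((1 - L) ^ 2)⁻¹ = ((1 - L) ^ 2) ^ (n - 2) := by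
    rw [mul_inv_eq_iff_eq_mul₀ (by positivity), ← pow_mul, ← pow_mul, ← pow_add]
    congr 1
    omega
  rw [mul_pow, mul_assoc, ← mul_assoc (_ ^ 2) (_ ⁻¹), hpow]
  refine (sum_wt_mul_isolatedInd_mul_le hμ hα hxy).trans
    (mul_le_mul_of_nonneg_left ?_ (sq_nonneg _))
  refine (expect_expect_sum_nonadj_pow_le hμ hμsum hK hα hL hL1 (n - 2)).trans ?_
  gcongr

lemma pr_connected_le (hμ : ∀ j, 0 ≤ μ j) (hμi : 0 < μ i) (hμsum : ∑ j, μ j = 1)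
    (hK : ∀ j, K j ≤ P) (hα : α ∈ Set.Icc (0 : ℝ) 1) (hn : 2 ≤ n) {L : ℝ}
    (hL : L = α * lamb μ K P i) (hL1 : L < 1) :
    pr μ K α (fun c : Config n r P => (graphOf c).Connected)
      ≤ (μ i)⁻¹ * (Real.exp (n * L / (1 - L) ^ 2) / n) +
        (((1 - L) ^ 2)⁻¹ * (1 + (∑ j, (μ j)⁻¹) *
          (n * L ^ 2 * Real.exp (n * L / (1 - L) ^ 2)) / (1 - L) ^ 2) - 1) := by
  classical
  have hL0 : 0 ≤ L := hL ▸ mul_nonneg hα.1 (lamb_nonneg hμ)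
  have hC : 0 ≤ ∑ j, (μ j)⁻¹ := sum_nonneg fun j _ => inv_nonneg.2 (hμ j)
  have hL' : 0 < 1 - L := sub_pos.2 hL1
  have : Nonempty (Fin n) := ⟨⟨0, by omega⟩⟩
  have hexp : ((1 - L) ^ (n - 1))⁻¹ ≤ Real.exp (n * L / (1 - L) ^ 2) := by
    refine (inv_one_sub_pow_le_exp hL1 (n - 1)).trans (Real.exp_le_exp.2 ?_)
    have hsq : (1 - L) ^ 2 ≤ 1 - L := pow_le_of_le_one hL'.le (by linarith) two_ne_zero
    have hle : ((n - 1 : ℕ) : ℝ) ≤ n := by exact_mod_cast Nat.sub_le n 1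
    gcongr
  have hcheb := sum_filter_le_of_pairwise (wt_nonneg hμ hα) (sum_wt hμsum hK)
    (isolatedInd_mul_self (n := n) (i := i))
    (fun c hc x => isolatedInd_eq_zero_of_connected hn hc x)
    (fun x => hL ▸ sum_wt_mul_isolatedInd hμsum hK x) (by positivity) (by positivity)
    (fun x y hxy => sum_wt_mul_isolatedInd_mul_le_sq_mul hμ hμsum hK hα hn hL hL1 hxy)
  rw [pr_eq_sum_filter]
  refine hcheb.trans (add_le_add_left ?_ _)
  rw [Fintype.card_fin, mul_inv, mul_inv, mul_left_comm, div_eq_inv_mul]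
  gcongr

end Moments

/-! ### Asymptotics below the threshold -/

section Asymptotics

lemma tendsto_log_pow_div_rpow (k : ℕ) {s : ℝ} (hs : 0 < s) :
    Tendsto (fun n : ℕ => Real.log n ^ k / (n : ℝ) ^ s) atTop (nhds 0) := by
  have h := (isLittleO_log_rpow_rpow_atTop (k : ℝ) hs).tendsto_div_nhds_zero
  simpa only [Function.comp_def, Real.rpow_natCast] using h.comp tendsto_natCast_atTop_atTop

variable {L : ℕ → ℝ} {c : ℝ}

lemma tendsto_zero_of_le_log_div (hL0 : ∀ n, 0 ≤ L n)
    (hL : ∀ᶠ n : ℕ in atTop, L n ≤ c * Real.log n / n) : Tendsto L atTop (nhds 0) := by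
  have h := (tendsto_log_pow_div_rpow 1 one_pos).const_mul c
  simp only [pow_one, Real.rpow_one, mul_zero, ← mul_div_assoc] at h
  exact squeeze_zero' (Eventually.of_forall hL0) hL h

lemma tendsto_one_sub_sq (hL : Tendsto L atTop (nhds 0)) :
    Tendsto (fun n => (1 - L n) ^ 2) atTop (nhds 1) := by
  simpa using (hL.const_sub 1).pow 2

lemma eventually_mul_le_mul_log (hL : ∀ᶠ n : ℕ in atTop, L n ≤ c * Real.log n / n) :
    ∀ᶠ n : ℕ in atTop, n * L n ≤ c * Real.log n := by
  filter_upwards [hL, eventually_gt_atTop 0] with n hn hn0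
  rwa [le_div_iff₀' (by exact_mod_cast hn0)] at hn

lemma eventually_exp_le_rpow (hL0 : ∀ n, 0 ≤ L n)
    (hL : ∀ᶠ n : ℕ in atTop, L n ≤ c * Real.log n / n) {c' : ℝ} (hc : c < c') :
    ∀ᶠ n : ℕ in atTop, Real.exp (n * L n / (1 - L n) ^ 2) ≤ (n : ℝ) ^ c' := by
  have hD := tendsto_one_sub_sq (tendsto_zero_of_le_log_div hL0 hL)
  have hcD : Tendsto (fun n => c' * (1 - L n) ^ 2) atTop (nhds c') := by
    simpa using hD.const_mul c'
  filter_upwards [eventually_mul_le_mul_log hL, hcD.eventually_const_lt hc,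
    hD.eventually_const_lt one_pos, eventually_ge_atTop 1] with n hnL hcn hDn hn
  have hlog : 0 ≤ Real.log n := Real.log_nonneg (by exact_mod_cast hn)
  rw [Real.rpow_def_of_pos (by exact_mod_cast hn), Real.exp_le_exp, div_le_iff₀ hDn]
  calc n * L n ≤ c * Real.log n := hnL
    _ ≤ c' * (1 - L n) ^ 2 * Real.log n := mul_le_mul_of_nonneg_right hcn.le hlog
    _ = Real.log n * c' * (1 - L n) ^ 2 := by ring

lemma tendsto_log_pow_mul_exp_div (hL0 : ∀ n, 0 ≤ L n)
    (hL : ∀ᶠ n : ℕ in atTop, L n ≤ c * Real.log n / n) (hc : c < 1) (k : ℕ) :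
    Tendsto (fun n : ℕ => Real.log n ^ k * (Real.exp (n * L n / (1 - L n) ^ 2) / n))
      atTop (nhds 0) := by
  obtain ⟨c', hcc', hc'1⟩ := exists_between hc
  refine squeeze_zero' (Eventually.of_forall fun n => ?_) ?_
    (tendsto_log_pow_div_rpow k (sub_pos.2 hc'1))
  · have := Real.log_natCast_nonneg n
    positivity
  · filter_upwards [eventually_exp_le_rpow hL0 hL hcc', eventually_gt_atTop 0] with n hexp hn
    have hn0 : (0 : ℝ) < n := by exact_mod_cast hn
    have := Real.log_natCast_nonneg n
    calc Real.log n ^ k * (Real.exp (n * L n / (1 - L n) ^ 2) / n)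
        ≤ Real.log n ^ k * ((n : ℝ) ^ c' / n) := by gcongr
      _ = Real.log n ^ k / (n : ℝ) ^ (1 - c') := by
        rw [Real.rpow_sub hn0, Real.rpow_one, div_div_eq_mul_div, mul_div_assoc]

lemma tendsto_mul_sq_mul_exp (hL0 : ∀ n, 0 ≤ L n)
    (hL : ∀ᶠ n : ℕ in atTop, L n ≤ c * Real.log n / n) (hc : c < 1) :
    Tendsto (fun n : ℕ => n * L n ^ 2 * Real.exp (n * L n / (1 - L n) ^ 2)) atTop (nhds 0) := by
  refine squeeze_zero' (Eventually.of_forall fun n => by positivity) ?_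
    (tendsto_log_pow_mul_exp_div hL0 hL hc 2)
  filter_upwards [eventually_mul_le_mul_log hL, eventually_gt_atTop 0] with n hnL hn
  have : (0 : ℝ) < n := by exact_mod_cast hn
  have hnL' : n * L n ≤ Real.log n :=
    hnL.trans (mul_le_of_le_one_left (Real.log_natCast_nonneg n) hc.le)
  calc n * L n ^ 2 * Real.exp (n * L n / (1 - L n) ^ 2)
      = (n * L n) ^ 2 * (Real.exp (n * L n / (1 - L n) ^ 2) / n) := by field_simp
    _ ≤ Real.log n ^ 2 * (Real.exp (n * L n / (1 - L n) ^ 2) / n) := by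
      have := hL0 n
      gcongr

lemma tendsto_connected_bound (hL0 : ∀ n, 0 ≤ L n)
    (hL : ∀ᶠ n : ℕ in atTop, L n ≤ c * Real.log n / n) (hc : c < 1) (a b : ℝ) :
    Tendsto (fun n : ℕ => a * (Real.exp (n * L n / (1 - L n) ^ 2) / n) +
      (((1 - L n) ^ 2)⁻¹ * (1 + b * (n * L n ^ 2 * Real.exp (n * L n / (1 - L n) ^ 2)) /
        (1 - L n) ^ 2) - 1)) atTop (nhds 0) := by
  have hD := tendsto_one_sub_sq (tendsto_zero_of_le_log_div hL0 hL)
  have hmean := (tendsto_log_pow_mul_exp_div hL0 hL hc 0).const_mul a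
  have herror := ((tendsto_mul_sq_mul_exp hL0 hL hc).const_mul b).div hD one_ne_zero
  simpa using hmean.add (((hD.inv₀ one_ne_zero).mul (herror.const_add 1)).sub_const 1)

lemma eventually_le_mul_log_div {b : ℕ → ℝ} (hL : ∀ᶠ n : ℕ in atTop, L n = b n * Real.log n / n)
    (hb : Tendsto b atTop (nhds c)) {c' : ℝ} (hc : c < c') :
    ∀ᶠ n : ℕ in atTop, L n ≤ c' * Real.log n / n := by
  filter_upwards [hL, hb.eventually_lt_const hc] with n hn hbn
  rw [hn]
  have := Real.log_natCast_nonneg n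
  gcongr

end Asymptotics

end

theorem connectivity_zero_law_general {r : ℕ} (μ : Fin (r + 1) → ℝ) (hμ : ∀ j, 0 ≤ μ j)
    (hμsum : ∑ j, μ j = 1) (K : ℕ → Fin (r + 1) → ℕ) (P : ℕ → ℕ) (α : ℕ → ℝ)
    (hKP : ∀ n j, K n j ≤ P n) (hα : ∀ n, α n ∈ Set.Icc (0 : ℝ) 1)
    (i : Fin (r + 1)) (hμi : 0 < μ i) {c : ℝ} (hc : c < 1)
    (hΛ : ∀ᶠ n : ℕ in atTop, α n * lamb μ (K n) (P n) i ≤ c * Real.log n / n) :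
    Tendsto (fun n => pr μ (K n) (α n) (fun cfg : Config n r (P n) => (graphOf cfg).Connected))
      atTop (nhds 0) := by
  have hΛ0 : ∀ n, 0 ≤ α n * lamb μ (K n) (P n) i := fun n =>
    mul_nonneg (hα n).1 (lamb_nonneg hμ)
  refine squeeze_zero' (Eventually.of_forall fun n => pr_nonneg hμ (hα n) _) ?_
    (tendsto_connected_bound hΛ0 hΛ hc (μ i)⁻¹ (∑ j, (μ j)⁻¹))
  filter_upwards [eventually_ge_atTop 2,
    (tendsto_zero_of_le_log_div hΛ0 hΛ).eventually_lt_const one_pos] with n hn hΛ1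
  exact pr_connected_le hμ hμi hμsum (hKP n) (hα n) hn rfl hΛ1

/-- zero-law for connectivity:
under the scaling `Λ₁(n) = αₙ λ₁(n) = cₙ log n / n` with `cₙ → c < 1`, the probability
that `G(n; μ, Kₙ, Pₙ, αₙ)` is connected tends to `0`. -/
theorem connectivity_zero_law {r : ℕ} (μ : Fin (r + 1) → ℝ)
    (hμpos : ∀ i, 0 < μ i) (hμsum : ∑ i, μ i = 1)
    (K : ℕ → Fin (r + 1) → ℕ) (P : ℕ → ℕ) (α : ℕ → ℝ)
    (hK1 : ∀ n, 1 ≤ K n 0) (hKmono : ∀ n, Monotone (K n))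
    (hKP : ∀ n, 2 * K n (Fin.last r) ≤ P n)
    (hα : ∀ n, α n ∈ Set.Ioo (0 : ℝ) 1)
    (cseq : ℕ → ℝ) (c : ℝ)
    (hscal : ∀ n, 2 ≤ n → α n * lamb μ (K n) (P n) 0 = cseq n * Real.log n / n)
    (hc : Tendsto cseq atTop (nhds c)) (hclt : c < 1) :
    Tendsto (fun n => pr μ (K n) (α n) (fun cfg : Config n r (P n) => (graphOf cfg).Connected))
      atTop (nhds 0) := by
  obtain ⟨c', hcc', hc'1⟩ := exists_between hclt
  refine connectivity_zero_law_general μ (fun j => (hμpos j).le) hμsum K P α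
    (fun n j => ?_) (fun n => Set.Ioo_subset_Icc_self (hα n)) 0 (hμpos 0) hc'1
    (eventually_le_mul_log_div ((eventually_ge_atTop 2).mono hscal) hc hcc')
  linarith [hKmono n (Fin.le_last j), hKP n]
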